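/- Let p be a prime and n ≥ 2. Let f ∈ 𝔽_p[x₁,…,xₙ] be a polynomial of total degree at most n of the form f = xₙ·g₁ + g₂, where g₁ and g₂ are polynomials in the variables x₁,…,x_{n−1} only (not involving xₙ). If Tr_{n−1}(g₁^{p−1}) = 1 in 𝔽_p[x₁,…,x_{n−1}] (so that g ↦ Tr_{n−1}(g₁^{p−1}·g) is a Frobenius splitting of 𝔽_p[x₁,…,x_{n−1}]), then Tr_n(f^{p−1}) = 1 in 𝔽_p[x₁,…,xₙ], so that g ↦ Tr_n(f^{p−1}·g) is a Frobenius splitting of 𝔽_p[x₁,…,xₙ]. -/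

import Mathlib

open MvPolynomial

/-- The near-splitting `Tr` on `𝔽_p[x₁,…,xₙ]`: on a monomial `∏ xᵢ^{eᵢ}` it gives
`∏ xᵢ^{(eᵢ+1)/p - 1}` if `p ∣ eᵢ + 1` for all `i`, and `0` otherwise, extended
`𝔽_p`-linearly (note that `c^{1/p} = c` for `c ∈ 𝔽_p`). -/
noncomputable def Tr (p n : ℕ) (g : MvPolynomial (Fin n) (ZMod p)) :
    MvPolynomial (Fin n) (ZMod p) :=
  ∑ m ∈ g.support,
    if ∀ i, p ∣ (m i + 1) then
      monomial (Finsupp.equivFunOnFinite.symm fun i => (m i + 1) / p - 1) (g.coeff m)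
    else 0

/-- A Frobenius splitting is an additive map `φ` with `φ (a^p * b) = a * φ b` and `φ 1 = 1`. -/
def IsFrobeniusSplitting (p : ℕ) {R : Type*} [CommRing R] (φ : R → R) : Prop :=
  (∀ a b : R, φ (a + b) = φ a + φ b) ∧ (∀ a b : R, φ (a ^ p * b) = a * φ b) ∧ φ 1 = 1

/-- The exponent `p * k + (p - 1)`. -/
noncomputable def trExp (p : ℕ) {n : ℕ} (k : Fin n →₀ ℕ) : Fin n →₀ ℕ :=
  Finsupp.equivFunOnFinite.symm fun i => p * k i + (p - 1)

lemma trExp_apply (p : ℕ) {n : ℕ} (k : Fin n →₀ ℕ) (i : Fin n) :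
    trExp p k i = p * k i + (p - 1) := rfl

lemma trExp_iff {p : ℕ} (hp : 0 < p) (a b : ℕ) :
    (p ∣ a + 1 ∧ (a + 1) / p - 1 = b) ↔ a = p * b + (p - 1) := by
  constructor
  · rintro ⟨⟨c, hc⟩, h⟩
    rw [hc, Nat.mul_div_cancel_left _ hp] at h
    rcases c with _ | c
    · simp at hc
    · have : c = b := by omega
      subst this
      rw [Nat.mul_succ] at hc
      omega
  · intro h
    have : a + 1 = p * (b + 1) := by rw [Nat.mul_succ]; omega
    rw [this, Nat.mul_div_cancel_left _ hp]
    exact ⟨dvd_mul_right _ _, by simp⟩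

lemma coeff_Tr {p : ℕ} (hp : 0 < p) {n : ℕ} (g : MvPolynomial (Fin n) (ZMod p))
    (k : Fin n →₀ ℕ) : coeff k (Tr p n g) = coeff (trExp p k) g := by
  classical
  have key : ∀ m : Fin n →₀ ℕ,
      coeff k (if ∀ i, p ∣ (m i + 1) then
        monomial (Finsupp.equivFunOnFinite.symm fun i => (m i + 1) / p - 1) (g.coeff m)
        else 0) = if trExp p k = m then coeff m g else 0 := by
    intro m
    have h : ((∀ i, p ∣ (m i + 1)) ∧
        (Finsupp.equivFunOnFinite.symm fun i => (m i + 1) / p - 1) = k) ↔ trExp p k = m := by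
      rw [Finsupp.ext_iff, Finsupp.ext_iff, ← forall_and]
      refine forall_congr' fun i => ?_
      rw [trExp_apply, eq_comm (b := m i), ← trExp_iff hp]
      rfl
    simp only [← h]
    by_cases h1 : ∀ i, p ∣ (m i + 1)
    · rw [if_pos h1, coeff_monomial]
      simp only [h1, implies_true, true_and]
    · rw [if_neg h1, if_neg (fun h => h1 h.1), coeff_zero]
  unfold Tr
  rw [coeff_sum, Finset.sum_congr rfl (fun m _ => key m), Finset.sum_ite_eq]
  split_ifs with h
  · rfl
  · exact (notMem_support_iff.1 h).symm

lemma Tr_add {p : ℕ} (hp : 0 < p) {n : ℕ} (a b : MvPolynomial (Fin n) (ZMod p)) :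
    Tr p n (a + b) = Tr p n a + Tr p n b := by
  ext k
  simp only [coeff_add, coeff_Tr hp]

lemma Tr_pow_mul {p : ℕ} (hp : p.Prime) {n : ℕ} (a b : MvPolynomial (Fin n) (ZMod p)) :
    Tr p n (a ^ p * b) = a * Tr p n b := by
  classical
  haveI : Fact p.Prime := ⟨hp⟩
  induction a using MvPolynomial.induction_on' with
  | monomial s c =>
    ext k
    rw [coeff_Tr hp.pos, monomial_pow, ZMod.pow_card, coeff_monomial_mul', coeff_monomial_mul',
      coeff_Tr hp.pos]
    have h : p • s ≤ trExp p k ↔ s ≤ k := by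
      rw [Finsupp.le_def, Finsupp.le_def]
      refine forall_congr' fun i => ?_
      rw [trExp_apply, Finsupp.smul_apply, smul_eq_mul]
      constructor
      · intro h
        by_contra! h2
        have := Nat.mul_le_mul_left p (Nat.succ_le_of_lt h2)
        rw [Nat.mul_succ] at this
        have := hp.pos
        omega
      · intro h
        exact (Nat.mul_le_mul_left p h).trans (Nat.le_add_right _ _)
    simp only [h]
    split_ifs with hs
    · congr 2
      ext i
      have h1 := Nat.mul_le_mul_left p (hs i)
      simp only [Finsupp.tsub_apply, trExp_apply, Finsupp.smul_apply, smul_eq_mul, Nat.mul_sub]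
      omega
    · rfl
  | add a a' ha ha' =>
    rw [add_pow_char, add_mul, Tr_add hp.pos, ha, ha', add_mul]

lemma coeff_X_last_pow_mul {R : Type*} [CommRing R] {n : ℕ} (j : ℕ) (h : MvPolynomial (Fin n) R)
    (M : Fin (n + 1) →₀ ℕ) (m : Fin n →₀ ℕ) (hm : ∀ i, m i = M (Fin.castSucc i)) :
    coeff M (X (Fin.last n) ^ j * rename Fin.castSucc h) =
      if M (Fin.last n) = j then coeff m h else 0 := by
  classical
  induction h using MvPolynomial.induction_on' with
  | monomial s c =>
    rw [rename_monomial, X_pow_eq_monomial, monomial_mul, coeff_monomial, coeff_monomial, one_mul,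
      ← ite_and]
    refine if_congr ?_ rfl rfl
    rw [Finsupp.ext_iff, Finsupp.ext_iff, Fin.forall_fin_succ', and_comm]
    refine and_congr ?_ (forall_congr' fun i => ?_)
    · rw [Finsupp.add_apply, Finsupp.single_eq_same, Finsupp.mapDomain_notin_range, add_zero,
        eq_comm]
      rintro ⟨i, hi⟩
      exact (Fin.castSucc_lt_last i).ne hi
    · rw [Finsupp.add_apply, Finsupp.single_eq_of_ne (Fin.castSucc_lt_last i).ne,
        Finsupp.mapDomain_apply (Fin.castSucc_injective n), zero_add, hm]
  | add a a' ha ha' =>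
    rw [map_add, mul_add, coeff_add, ha, ha', coeff_add]
    split_ifs <;> simp

lemma Tr_main {p : ℕ} (hp : p.Prime) {n : ℕ} (g₁ g₂ : MvPolynomial (Fin n) (ZMod p)) :
    Tr p (n + 1) ((X (Fin.last n) * rename Fin.castSucc g₁ + rename Fin.castSucc g₂) ^ (p - 1)) =
      rename Fin.castSucc (Tr p n (g₁ ^ (p - 1))) := by
  classical
  ext k
  let m : Fin n →₀ ℕ := Finsupp.equivFunOnFinite.symm fun i => k (Fin.castSucc i)
  have e := coeff_X_last_pow_mul 0 (Tr p n (g₁ ^ (p - 1))) k m (fun i => rfl)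
  rw [pow_zero, one_mul] at e
  rw [e, coeff_Tr hp.pos, coeff_Tr hp.pos, add_pow, coeff_sum]
  have key : ∀ j ∈ Finset.range (p - 1 + 1),
      coeff (trExp p k) ((X (Fin.last n) * rename Fin.castSucc g₁) ^ j *
        rename Fin.castSucc g₂ ^ (p - 1 - j) * ((p - 1).choose j : MvPolynomial _ (ZMod p))) =
      if p - 1 = j then (if k (Fin.last n) = 0 then coeff (trExp p m) (g₁ ^ (p - 1)) else 0)
      else 0 := by
    intro j hj
    have hj' := Finset.mem_range.1 hj
    have r : (X (Fin.last n) * rename Fin.castSucc g₁) ^ j *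
        rename Fin.castSucc g₂ ^ (p - 1 - j) * ((p - 1).choose j : MvPolynomial _ (ZMod p)) =
        X (Fin.last n) ^ j * rename Fin.castSucc (g₁ ^ j * g₂ ^ (p - 1 - j) *
          ((p - 1).choose j : MvPolynomial _ (ZMod p))) := by
      simp only [map_mul, map_pow, map_natCast]
      ring
    rw [r, coeff_X_last_pow_mul j _ (trExp p k) (trExp p m) (fun i => rfl), trExp_apply]
    by_cases h0 : k (Fin.last n) = 0
    · rw [h0, mul_zero, zero_add, if_pos rfl]
      by_cases h : p - 1 = j
      · subst h
        simp
      · rw [if_neg h, if_neg h]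
    · have h3 : p * 1 ≤ p * k (Fin.last n) := Nat.mul_le_mul_left p (Nat.pos_of_ne_zero h0)
      have := hp.pos
      rw [if_neg (by omega), if_neg h0, ite_self]
  rw [Finset.sum_congr rfl key, Finset.sum_ite_eq, if_pos (by simp)]

/-- stated with `n + 1 ≥ 2` variables: let `f ∈ 𝔽_p[x₁,…,xₙ₊₁]` of total
degree at most `n + 1` have the form `f = xₙ₊₁·g₁ + g₂` where `g₁, g₂` involve only the
first `n` variables. If `Tr_n(g₁^{p−1}) = 1` (so `g ↦ Tr_n(g₁^{p−1}·g)` is a Frobenius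
splitting of `𝔽_p[x₁,…,xₙ]`), then `Tr_{n+1}(f^{p−1}) = 1`, so `g ↦ Tr_{n+1}(f^{p−1}·g)`
is a Frobenius splitting of `𝔽_p[x₁,…,xₙ₊₁]`. -/
theorem stmt_19 {p : ℕ} (hp : p.Prime) {n : ℕ} (hn : 1 ≤ n)
    (f : MvPolynomial (Fin (n + 1)) (ZMod p))
    (g₁ g₂ : MvPolynomial (Fin n) (ZMod p))
    (hdeg : f.totalDegree ≤ n + 1)
    (hf : f = X (Fin.last n) * rename Fin.castSucc g₁ + rename Fin.castSucc g₂)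
    (h1 : Tr p n (g₁ ^ (p - 1)) = 1) :
    Tr p (n + 1) (f ^ (p - 1)) = 1 ∧
      IsFrobeniusSplitting p (fun g => Tr p (n + 1) (f ^ (p - 1) * g)) := by
  have key : Tr p (n + 1) (f ^ (p - 1)) = 1 := by
    rw [hf, Tr_main hp, h1, map_one]
  refine ⟨key, fun a b => ?_, fun a b => ?_, ?_⟩
  · simp only [mul_add, Tr_add hp.pos]
  · simp only [mul_left_comm _ (a ^ p), Tr_pow_mul hp]
  · simpa using key
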